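/- Recoverability with unknown spatial degradation operators (Theorem 3). Let R, L, M, N and dimensions I_M, J_M, K_H, I_H, J_H, K_M be positive integers with K_M ≥ 2·N, I_H ≥ L·R, J_H ≥ M·R, I_M ≥ L·R, J_M ≥ M·R, and L·M ≥ N ≥ max(⌈L/M⌉ + ⌈M/L⌉, 3). Let P₁ ∈ ℝ^{I_H×I_M}, P₂ ∈ ℝ^{J_H×J_M}, and P_M ∈ ℝ^{K_M×K_H} be fixed matrices of full row rank. Then for Lebesgue-almost every tuple of ground-truth factors (A_r ∈ ℝ^{I_M×L}, B_r ∈ ℝ^{J_M×M}, C_r ∈ ℝ^{K_H×N}, D_r ∈ ℝ^{L×M×N}), r = 1,…,R, the following holds. Define Y_S = Σ_r D_r ×₁ A_r ×₂ B_r ×₃ C_r, Y_H = Σ_r D_r ×₁ (P₁·A_r) ×₂ (P₂·B_r) ×₃ C_r, and Y_M = Σ_r D_r ×₁ A_r ×₂ B_r ×₃ (P_M·C_r). For every tuple (Ã_r ∈ ℝ^{I_H×L}, B̃_r ∈ ℝ^{J_H×M}, A*_r ∈ ℝ^{I_M×L}, B*_r ∈ ℝ^{J_M×M}, C*_r ∈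 ℝ^{K_H×N}, D*_r ∈ ℝ^{L×M×N}), r = 1,…,R, satisfying both Y_H = Σ_r D*_r ×₁ Ã_r ×₂ B̃_r ×₃ C*_r and Y_M = Σ_r D*_r ×₁ A*_r ×₂ B*_r ×₃ (P_M·C*_r), one has Σ_r D*_r ×₁ A*_r ×₂ B*_r ×₃ C*_r = Y_S. -/

import Mathlib

open MeasureTheory

/-- Lebesgue (volume) measure on a real matrix space: the standard product
Lebesgue measure on the entries (inherited from the Pi type). -/
noncomputable instance matrixMeasureSpace (m n : ℕ) :
    MeasureSpace (Matrix (Fin m) (Fin n) ℝ) :=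
  inferInstanceAs (MeasureSpace (Fin m → Fin n → ℝ))

/-- Tucker (multilinear) product `D ×₁ A ×₂ B ×₃ C` of a third-order tensor
`D ∈ ℝ^{L×M×N}` with matrices `A ∈ ℝ^{I×L}`, `B ∈ ℝ^{J×M}`, `C ∈ ℝ^{K×N}`. -/
def tucker {L M N I J K : ℕ} (D : Fin L → Fin M → Fin N → ℝ)
    (A : Matrix (Fin I) (Fin L) ℝ) (B : Matrix (Fin J) (Fin M) ℝ)
    (C : Matrix (Fin K) (Fin N) ℝ) : Fin I → Fin J → Fin K → ℝ :=
  fun i j k => ∑ l, ∑ m, ∑ n, D l m n * A i l * B j m * C k n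

/-!
View the third-order tensors with frontal slices `T i : Matrix l m K` as Kronecker modules, a
morphism `T ⟶ S` being a pair `(X, Y)` with `X * T i = S i * Y` for all `i`. For generic factors,
every core tensor is a brick (its endomorphisms are scalars), and since the column spaces of the
`C r`, and also those of the `PM * C r`, are pairwise independent, the terms of each decomposition
form a semibrick. A Krull–Schmidt argument then determines the terms of either observed image up to
a permutation and a change of basis in the first two modes. Matching the terms of `Y_H` shows that
every column space of `C'` is contained in some column space of `C`, on which `PM` is injective.
Matching the terms of `Y_M` and cancelling `PM`, we recover the terms of `Y_S`.

Genericity comes from one principle: a linear family of linear maps that is injective at one point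
`x₀` is injective almost everywhere, because along every line parallel to `x₀` the relevant
determinant is a characteristic polynomial. An explicit brick provides such a point.
-/

open Matrix Function

section ModeProd

variable {K k n p V W : Type*} [CommSemiring K] [Fintype n] [AddCommMonoid V]
  [Module K V] [AddCommMonoid W] [Module K W]

/-- The product `S ×₃ C` of a tensor, given by the family `S` of its frontal slices, with a matrix
`C` along the third mode. -/
def modeProd (C : Matrix k n K) : (n → V) →ₗ[K] k → V :=
  LinearMap.pi fun i => ∑ j, C i j • LinearMap.proj j

theorem modeProd_apply (C : Matrix k n K) (S : n → V) (i : k) :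
    modeProd C S i = ∑ j, C i j • S j := by
  simp only [modeProd, LinearMap.pi_apply, LinearMap.sum_apply, LinearMap.smul_apply,
    LinearMap.proj_apply]

theorem modeProd_mul [Fintype p] (C : Matrix k n K) (G : Matrix n p K) (S : p → V) :
    modeProd (C * G) S = modeProd C (modeProd G S) := by
  funext i
  simp only [modeProd_apply, Matrix.mul_apply, Finset.sum_smul, Finset.smul_sum, smul_smul]
  exact Finset.sum_comm

theorem map_modeProd (f : V →ₗ[K] W) (C : Matrix k n K) (S : n → V) :
    modeProd C (fun j => f (S j)) = fun i => f (modeProd C S i) := by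
  funext i
  simp only [modeProd_apply, map_sum, map_smul]

theorem modeProd_fromCols [Fintype p] (C : Matrix k n K) (C' : Matrix k p K) (S : n → V)
    (S' : p → V) :
    modeProd (fromCols C C') (Sum.elim S S') = modeProd C S + modeProd C' S' := by
  funext i
  simp only [modeProd_apply, Fintype.sum_sum_type, fromCols_apply_inl, fromCols_apply_inr,
    Sum.elim_inl, Sum.elim_inr, Pi.add_apply]

theorem modeProd_mul_mul {l m q : Type*} [Fintype l] [Fintype m] (C : Matrix k n K)
    (X : Matrix p l K) (S : n → Matrix l m K) (Y : Matrix m q K) :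
    (modeProd C fun j => X * S j * Y) = fun i => X * modeProd C S i * Y :=
  map_modeProd (mulRightLinearMap p K Y ∘ₗ mulLeftLinearMap m K X) C S

end ModeProd

section FullColumnRank

variable {K k n p V : Type*} [Field K] [Fintype n] [AddCommGroup V] [Module K V]

theorem exists_mul_eq_one_of_mulVec_injective [Fintype k] [DecidableEq n] {C : Matrix k n K}
    (hC : Injective C.mulVec) : ∃ G : Matrix n k K, G * C = 1 := by
  classical
  obtain ⟨g, hg⟩ := (toLin' C).exists_leftInverse_of_injective (LinearMap.ker_eq_bot.2 hC)
  refine ⟨LinearMap.toMatrix' g, toLin'.injective ?_⟩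
  rw [toLin'_mul, toLin'_toMatrix', hg, toLin'_one]

theorem modeProd_injective {C : Matrix k n K} (hC : Injective C.mulVec) :
    Injective (modeProd C : (n → V) → k → V) := by
  refine (injective_iff_map_eq_zero _).2 fun S hS => funext fun j => ?_
  refine (Module.forall_dual_apply_eq_zero_iff K _).1 fun φ => ?_
  have hφ : C *ᵥ (fun j => φ (S j)) = C *ᵥ 0 := by
    rw [mulVec_zero]
    funext i
    simpa only [modeProd_apply, mulVec, dotProduct, map_sum, map_smul, smul_eq_mul, Pi.zero_apply,
      map_zero] using congrArg φ (congrFun hS i)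
  exact congrFun (hC hφ) j

theorem eq_zero_of_modeProd_eq [Fintype p] {C : Matrix k n K} {C' : Matrix k p K}
    (hC : Injective (fromCols C C').mulVec) {S : n → V} {S' : p → V}
    (h : modeProd C S = modeProd C' S') : S = 0 ∧ S' = 0 := by
  have hsum : modeProd (fromCols C C') (Sum.elim S (-S')) = modeProd (fromCols C C') 0 := by
    rw [modeProd_fromCols, map_neg, h, add_neg_cancel, map_zero]
  have helim := modeProd_injective hC hsum
  exact ⟨funext fun j => congrFun helim (.inl j),
    neg_eq_zero.1 (funext fun j => congrFun helim (.inr j))⟩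

theorem exists_eq_mul_of_modeProd_eq {C C' : Matrix k n K} {S S' : n → V}
    (hC : Injective C.mulVec) (hS : LinearIndependent K S) (h : modeProd C S = modeProd C' S') :
    ∃ Z : Matrix n n K, C' = C * Z := by
  classical
  obtain ⟨g, hg⟩ := (Fintype.linearCombination K S).exists_leftInverse_of_injective
    (LinearMap.ker_eq_bot.2 hS.fintypeLinearCombination_injective)
  have hgS (j : n) : g (S j) = Pi.single j 1 := by
    simpa only [LinearMap.comp_apply, Fintype.linearCombination_apply_single, one_smul,
      LinearMap.id_apply] using LinearMap.congr_fun hg (Pi.single j 1)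
  have hCW : C = C' * of fun j => g (S' j) := by
    ext i j
    have hi := congrFun ((map_modeProd g C S).trans
      ((congrArg (g ∘ ·) h).trans (map_modeProd g C' S').symm)) i
    simpa only [modeProd_apply, hgS, Finset.sum_apply, Pi.smul_apply, Pi.single_apply, smul_eq_mul,
      mul_ite, mul_one, mul_zero, Finset.sum_ite_eq, Finset.mem_univ, if_true, mul_apply,
      of_apply] using congrFun hi j
  have hunit : IsUnit (of fun j => g (S' j) : Matrix n n K) := by
    rw [hCW] at hC
    refine mulVec_injective_iff_isUnit.1 (Injective.of_comp (f := C'.mulVec) ?_)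
    simpa only [comp_def, mulVec_mulVec] using hC
  obtain ⟨Z, hZ⟩ := hunit.exists_right_inv
  exact ⟨Z, by rw [hCW, Matrix.mul_assoc, hZ, Matrix.mul_one]⟩

theorem modeProd_eq_of_mul_modeProd_eq {ι k' : Type*} [Fintype k] [Nonempty n]
    {P : Matrix k' k K} {C : ι → Matrix k n K} {S : ι → n → V}
    (hC : ∀ r, Injective (P * C r).mulVec)
    (hpair : ∀ r s, r ≠ s → Injective (fromCols (P * C r) (P * C s)).mulVec)
    (hS : ∀ r, LinearIndependent K (S r)) {r s : ι} {Z : Matrix n n K} {W : n → V}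
    (h : modeProd (P * C r) (S r) = modeProd (P * (C s * Z)) W) :
    modeProd (C r) (S r) = modeProd (C s * Z) W := by
  rw [← Matrix.mul_assoc, modeProd_mul (P * C s)] at h
  obtain ⟨j⟩ := ‹Nonempty n›
  have hrs : r = s := by
    by_contra hne
    exact (hS r).ne_zero j (congrFun (eq_zero_of_modeProd_eq (hpair r s hne) h).1 j)
  subst hrs
  rw [modeProd_mul, modeProd_injective (hC r) h]

end FullColumnRank

section Slices

variable {K k l l' m m' p : Type*} [CommRing K] [Fintype l] [Fintype m']

/-- `X * T i = S i * Y` for every `i`: the pair `(X, Y)` is a morphism `T ⟶ S` of Kronecker modules,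
i.e. of third-order tensors given by their frontal slices. -/
def Intertwines (T : k → Matrix l m K) (S : k → Matrix l' m' K) (X : Matrix l' l K)
    (Y : Matrix m' m K) : Prop :=
  ∀ i, X * T i = S i * Y

/-- Frontal slices `T` whose mode-1 unfolding has full row rank. -/
def LeftFaithful (T : k → Matrix l m K) : Prop :=
  ∀ v : l → K, (∀ i, v ᵥ* T i = 0) → v = 0

theorem Intertwines.transpose {T : k → Matrix l m K}
    {S : k → Matrix l' m' K} {X : Matrix l' l K} {Y : Matrix m' m K} (h : Intertwines T S X Y) :
    Intertwines (fun i => (S i)ᵀ) (fun i => (T i)ᵀ) Yᵀ Xᵀ := fun i => by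
  rw [← transpose_mul, ← transpose_mul, h i]

theorem Intertwines.comp {l'' m'' : Type*} [Fintype l'] [Fintype m''] {T : k → Matrix l m K}
    {S : k → Matrix l' m' K} {U : k → Matrix l'' m'' K} {X : Matrix l' l K} {Y : Matrix m' m K}
    {X' : Matrix l'' l' K} {Y' : Matrix m'' m' K} (h : Intertwines T S X Y)
    (h' : Intertwines S U X' Y') : Intertwines T U (X' * X) (Y' * Y) := fun i => by
  rw [Matrix.mul_assoc, h i, ← Matrix.mul_assoc, h' i, Matrix.mul_assoc]

theorem LeftFaithful.eq_zero {T : k → Matrix l m K} (hT : LeftFaithful T) {X : Matrix p l K}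
    (h : ∀ i, X * T i = 0) : X = 0 :=
  ext_row fun a => hT _ fun i =>
    (mul_apply_eq_vecMul X (T i) a).symm.trans (congrFun (h i) a)

end Slices

section Semibricks

variable {K k l m n ι : Type*} [CommRing K] [Fintype l] [Fintype m] [DecidableEq l] [DecidableEq m]

/-- A brick: a tensor (given by its frontal slices) having only scalar endomorphisms. -/
def IsBrick (T : k → Matrix l m K) : Prop :=
  ∀ X Y, Intertwines T T X Y → ∃ c : K, X = c • 1 ∧ Y = c • 1

/-- A semibrick: a family of bricks without nonzero morphisms between distinct members. -/
structure IsSemibrick (T : ι → k → Matrix l m K) : Prop where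
  isBrick : ∀ r, IsBrick (T r)
  orthogonal : ∀ r s, r ≠ s → ∀ X Y, Intertwines (T r) (T s) X Y → X = 0 ∧ Y = 0

theorem IsBrick.transpose {T : k → Matrix l m K} (hT : IsBrick T) :
    IsBrick fun i => (T i)ᵀ := fun X Y h => by
  obtain ⟨c, hY, hX⟩ := hT Yᵀ Xᵀ h.transpose
  refine ⟨c, transpose_injective ?_, transpose_injective ?_⟩ <;>
    simpa only [transpose_smul, transpose_one]

theorem IsBrick.leftFaithful [Nonempty m] {T : k → Matrix l m K} (hT : IsBrick T) :
    LeftFaithful T := fun v hv => by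
  obtain ⟨c, hX, hY⟩ := hT (vecMulVec 1 v) 0 fun i => by
    rw [vecMulVec_mul, hv i, Matrix.mul_zero]
    exact Matrix.ext fun _ _ => mul_zero _
  obtain ⟨b⟩ := ‹Nonempty m›
  have hc : c = 0 := by simpa using (congrFun₂ hY b b).symm
  funext a
  simpa [vecMulVec_apply, hc] using congrFun₂ hX a a

end Semibricks

section Blocks

variable {K k l m n p ι : Type*}

/-- The `(r, s)` block of a matrix whose rows and columns are partitioned by the second index. -/
def block (X : Matrix (l × ι) (m × ι) K) (r s : ι) : Matrix l m K :=
  X.submatrix (·, r) (·, s)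

/-- The block row matrix `[A₁ A₂ ⋯]`. -/
def hconcat (A : ι → Matrix p l K) : Matrix p (l × ι) K :=
  of fun i j => A j.2 i j.1

theorem hconcat_injective : Injective (hconcat : (ι → Matrix p l K) → Matrix p (l × ι) K) :=
  fun _ _ h => funext fun r => Matrix.ext fun i j => congrFun₂ h i (j, r)

theorem block_blockDiagonal_self [DecidableEq ι] [Zero K] (T : ι → Matrix l m K) (r : ι) :
    block (blockDiagonal T) r r = T r :=
  Matrix.ext fun i j => blockDiagonal_apply_eq T i j r

variable [CommRing K] [Fintype ι]

theorem hconcat_mul_transpose [Fintype l] (A : ι → Matrix n l K) (B : ι → Matrix p l K) :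
    hconcat A * (hconcat B)ᵀ = ∑ r, A r * (B r)ᵀ := by
  ext i j
  simp only [hconcat, mul_apply, Matrix.sum_apply, Fintype.sum_prod_type_right, of_apply,
    transpose_apply]

theorem block_mul [Fintype m] (X : Matrix (l × ι) (m × ι) K) (Y : Matrix (m × ι) (n × ι) K)
    (r s : ι) : block (X * Y) r s = ∑ t, block X r t * block Y t s := by
  ext i j
  simp only [block, submatrix_apply, mul_apply, Matrix.sum_apply, Fintype.sum_prod_type_right]

theorem hconcat_mul [Fintype l] (A : ι → Matrix p l K) (X : Matrix (l × ι) (m × ι) K) :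
    hconcat A * X = hconcat fun s => ∑ r, A r * block X r s := by
  ext i j
  simp only [hconcat, block, submatrix_apply, mul_apply, Matrix.sum_apply,
    Fintype.sum_prod_type_right, of_apply]

theorem eq_mul_block_of_hconcat_eq_mul [Fintype l] {A : ι → Matrix p l K} {A' : ι → Matrix p m K}
    {X : Matrix (l × ι) (m × ι) K} (h : hconcat A' = hconcat A * X) {r s : ι}
    (hX : ∀ t ≠ r, block X t s = 0) : A' s = A r * block X r s := by
  rw [hconcat_mul] at h
  exact (congrFun (hconcat_injective h) s).trans
    (Fintype.sum_eq_single r fun t ht => by rw [hX t ht, Matrix.mul_zero])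

variable [DecidableEq ι]

theorem block_mul_blockDiagonal [Fintype m] (X : Matrix (l × ι) (m × ι) K)
    (T : ι → Matrix m n K) (r s : ι) : block (X * blockDiagonal T) r s = block X r s * T s := by
  ext i j
  simp only [block, submatrix_apply, mul_apply, blockDiagonal_apply, Fintype.sum_prod_type,
    mul_ite, mul_zero, Finset.sum_ite_eq', Finset.mem_univ, if_true]

theorem block_blockDiagonal_mul [Fintype m] (T : ι → Matrix l m K)
    (X : Matrix (m × ι) (n × ι) K) (r s : ι) :
    block (blockDiagonal T * X) r s = T r * block X r s := by
  ext i j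
  simp only [block, submatrix_apply, mul_apply, blockDiagonal_apply, Fintype.sum_prod_type,
    ite_mul, zero_mul, Finset.sum_ite_eq, Finset.mem_univ, if_true]

theorem hconcat_mul_blockDiagonal [Fintype l] (A : ι → Matrix p l K) (T : ι → Matrix l m K) :
    hconcat A * blockDiagonal T = hconcat fun r => A r * T r := by
  ext i j
  simp only [hconcat, of_apply, mul_apply, blockDiagonal_apply, Fintype.sum_prod_type,
    mul_ite, mul_zero, Finset.sum_ite_eq', Finset.mem_univ, if_true]

theorem hconcat_mul_blockDiagonal_mul [Fintype l] [Fintype m] (A : ι → Matrix n l K)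
    (T : ι → Matrix l m K) (B : ι → Matrix p m K) :
    hconcat A * blockDiagonal T * (hconcat B)ᵀ = ∑ r, A r * T r * (B r)ᵀ := by
  rw [hconcat_mul_blockDiagonal, hconcat_mul_transpose]

/-- The direct sum of a family of tensors given by their frontal slices. -/
def directSum (T : ι → k → Matrix l m K) (i : k) : Matrix (l × ι) (m × ι) K :=
  blockDiagonal fun r => T r i

theorem Intertwines.toBlock [Fintype l] [Fintype m] {T S : ι → k → Matrix l m K}
    {X : Matrix (l × ι) (l × ι) K} {Y : Matrix (m × ι) (m × ι) K}
    (h : Intertwines (directSum T) (directSum S) X Y) (r s : ι) :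
    Intertwines (T s) (S r) (block X r s) (block Y r s) := fun i => by
  have hX := block_mul_blockDiagonal X (fun r => T r i) r s
  have hY := block_blockDiagonal_mul (fun r => S r i) Y r s
  exact hX.symm.trans ((congrArg (block · r s) (h i)).trans hY)

theorem leftFaithful_directSum [Fintype l] {T : ι → k → Matrix l m K}
    (hT : ∀ r, LeftFaithful (T r)) : LeftFaithful (directSum T) := fun v hv => by
  have hblock (r : ι) : (fun a => v (a, r)) = 0 := hT r _ fun i => by
    funext b
    simpa [directSum, vecMul, dotProduct, Fintype.sum_prod_type, blockDiagonal_apply]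
      using congrFun (hv i) (b, r)
  funext ⟨a, r⟩
  exact congrFun (hblock r) a

end Blocks

section KrullSchmidt

variable {K k l m ι : Type*} [Field K] [Fintype l] [Fintype m] [Fintype ι] [DecidableEq l]
  [DecidableEq m] [DecidableEq ι]

theorem IsSemibrick.exists_scalar {T S : ι → k → Matrix l m K} (hT : IsSemibrick T)
    {X X' : Matrix (l × ι) (l × ι) K} {Y Y' : Matrix (m × ι) (m × ι) K}
    (h : Intertwines (directSum S) (directSum T) X Y)
    (h' : Intertwines (directSum T) (directSum S) X' Y') (r s : ι) :
    (∃ c : K, block X r s * block X' s r = c • 1 ∧ block Y r s * block Y' s r = c • 1) ∧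
      ∀ t ≠ r, block X t s * block X' s r = 0 ∧ block Y t s * block Y' s r = 0 := by
  have hcomp (t : ι) := (h'.toBlock s r).comp (h.toBlock t s)
  exact ⟨hT.isBrick r _ _ (hcomp r), fun t ht => hT.orthogonal r t ht.symm _ _ (hcomp t)⟩

theorem IsSemibrick.exists_block_mul_eq_smul_one [Nonempty l] {T S : ι → k → Matrix l m K}
    (hT : IsSemibrick T) {X X' : Matrix (l × ι) (l × ι) K} {Y Y' : Matrix (m × ι) (m × ι) K}
    (h : Intertwines (directSum S) (directSum T) X Y)
    (h' : Intertwines (directSum T) (directSum S) X' Y') (hXX' : X * X' = 1) (r : ι) :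
    ∃ s, ∃ c : K, c ≠ 0 ∧ block X r s * block X' s r = c • 1 ∧
      block Y r s * block Y' s r = c • 1 := by
  -- The endomorphisms of the brick `T r` that factor through the `S s` are scalars with sum `1`.
  choose c hcX hcY using fun s => (hT.exists_scalar h h' r s).1
  have hsum : (∑ s, c s) • (1 : Matrix l l K) = 1 := by
    rw [Finset.sum_smul, ← Finset.sum_congr rfl fun s _ => hcX s, ← block_mul, hXX']
    ext i j
    simp [block, one_apply]
  have hne : ∑ s, c s ≠ 0 := fun h0 => one_ne_zero (hsum.symm.trans (by rw [h0, zero_smul]))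
  obtain ⟨s, -, hs⟩ := Finset.exists_ne_zero_of_sum_ne_zero hne
  exact ⟨s, c s, hs, hcX s, hcY s⟩

theorem isUnit_of_mul_eq_smul_one {c : K} (hc : c ≠ 0) {P Q : Matrix l l K}
    (hPQ : P * Q = c • 1) : IsUnit P ∧ IsUnit Q :=
  ⟨IsUnit.of_mul_eq_one (c⁻¹ • Q) (by rw [mul_smul_comm, hPQ, inv_smul_smul₀ hc]),
    IsUnit.of_mul_eq_one_right (c⁻¹ • P) (by rw [smul_mul_assoc, hPQ, inv_smul_smul₀ hc])⟩

theorem IsSemibrick.exists_perm [Nonempty l] {T S : ι → k → Matrix l m K}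
    (hT : IsSemibrick T) {X X' : Matrix (l × ι) (l × ι) K} {Y Y' : Matrix (m × ι) (m × ι) K}
    (h : Intertwines (directSum S) (directSum T) X Y)
    (h' : Intertwines (directSum T) (directSum S) X' Y') (hXX' : X * X' = 1) :
    ∃ π : Equiv.Perm ι, ∀ r s, r ≠ π s → block X r s = 0 ∧ block Y' s r = 0 := by
  choose ρ c hc hX hY using hT.exists_block_mul_eq_smul_one h h' hXX'
  have hX0 (r t : ι) (ht : t ≠ r) : block X t (ρ r) = 0 :=
    (isUnit_of_mul_eq_smul_one (hc r) (hX r)).2.mul_left_eq_zero.1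
      ((hT.exists_scalar h h' r (ρ r)).2 t ht).1
  have hY0 (r t : ι) (ht : t ≠ r) : block Y' (ρ r) t = 0 :=
    (isUnit_of_mul_eq_smul_one (hc r) (hY r)).1.mul_right_eq_zero.1
      ((hT.exists_scalar h h' t (ρ r)).2 r ht.symm).2
  have hρ : Injective ρ := fun r t hrt => by
    by_contra hne
    have hzero : c t • (1 : Matrix l l K) = 0 := by
      rw [← hX t, ← hrt, hX0 r t (Ne.symm hne), Matrix.zero_mul]
    exact hc t ((smul_eq_zero.1 hzero).resolve_right one_ne_zero)
  let π := (Equiv.ofBijective ρ (Finite.injective_iff_bijective.1 hρ)).symm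
  have hπ (s : ι) : ρ (π s) = s := Equiv.ofBijective_apply_symm_apply ρ _ s
  refine ⟨π, fun r s hrs => ?_⟩
  have hzero := And.intro (hX0 (π s) r hrs) (hY0 (π s) r hrs)
  rwa [hπ] at hzero

end KrullSchmidt

section BlockTermDecomposition

variable {K k l m p q ι : Type*} [Field K] [Fintype l] [DecidableEq l]

theorem LeftFaithful.isUnit {T S : k → Matrix l m K} {X : Matrix l l K} (hT : LeftFaithful T)
    (h : ∀ i, T i = X * S i) : IsUnit X := by
  rw [← vecMul_injective_iff_isUnit]
  refine (injective_iff_map_eq_zero (vecMulLinear X)).2 fun v hv => hT v fun i => ?_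
  rw [h i, ← vecMul_vecMul, show v ᵥ* X = 0 from hv, zero_vecMul]

variable [Fintype m] [DecidableEq m]

theorem isUnit_and_eq_mul_of_mul_mul_transpose_eq [Fintype p] [Fintype q]
    {T S : k → Matrix l m K} (hT : LeftFaithful T) {A A' : Matrix p l K} {B B' : Matrix q m K}
    {G : Matrix l p K} {H : Matrix m q K} (hG : G * A = 1) (hH : H * B = 1)
    (h : ∀ i, A * T i * Bᵀ = A' * S i * B'ᵀ) :
    IsUnit (G * A') ∧ A' = A * (G * A') := by
  set X := G * A' with hX
  have hAT (i : k) : A * T i = A' * (S i * (H * B')ᵀ) := by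
    rw [transpose_mul, ← Matrix.mul_assoc, ← Matrix.mul_assoc, ← h i, Matrix.mul_assoc _ Bᵀ,
      ← transpose_mul, hH, transpose_one, Matrix.mul_one]
  have hTX (i : k) : T i = X * (S i * (H * B')ᵀ) := by
    rw [hX, Matrix.mul_assoc, ← hAT, ← Matrix.mul_assoc, hG, Matrix.one_mul]
  have hXunit : IsUnit X := hT.isUnit hTX
  obtain ⟨V, hVX⟩ := hXunit.exists_left_inv
  have hzero : A' * V - A = 0 := hT.eq_zero fun i => by
    rw [Matrix.sub_mul, hAT, hTX i, Matrix.mul_assoc, ← Matrix.mul_assoc V, hVX, Matrix.one_mul,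
      sub_self]
  refine ⟨hXunit, ?_⟩
  rw [← sub_eq_zero.1 hzero, Matrix.mul_assoc, hVX, Matrix.mul_one]

theorem exists_isUnit_of_mul_mul_transpose_eq [Finite p] [Finite q] {T S : k → Matrix l m K}
    (hT : LeftFaithful T) (hT' : LeftFaithful fun i => (T i)ᵀ) {A A' : Matrix p l K}
    {B B' : Matrix q m K} (hA : Injective A.mulVec) (hB : Injective B.mulVec)
    (h : ∀ i, A * T i * Bᵀ = A' * S i * B'ᵀ) :
    ∃ (X : Matrix l l K) (Y : Matrix m m K), IsUnit X ∧ IsUnit Y ∧ A' = A * X ∧ B' = B * Y ∧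
      ∀ i, T i = X * S i * Yᵀ := by
  have := Fintype.ofFinite p
  have := Fintype.ofFinite q
  obtain ⟨G, hG⟩ := exists_mul_eq_one_of_mulVec_injective hA
  obtain ⟨H, hH⟩ := exists_mul_eq_one_of_mulVec_injective hB
  have htranspose (i : k) : B * (T i)ᵀ * Aᵀ = B' * (S i)ᵀ * A'ᵀ := by
    simpa only [transpose_mul, transpose_transpose, Matrix.mul_assoc] using
      congrArg transpose (h i)
  obtain ⟨hX, hA'⟩ := isUnit_and_eq_mul_of_mul_mul_transpose_eq hT hG hH h
  obtain ⟨hY, hB'⟩ := isUnit_and_eq_mul_of_mul_mul_transpose_eq hT' hH hG htranspose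
  refine ⟨G * A', H * B', hX, hY, hA', hB', fun i => ?_⟩
  calc T i = G * A * T i * (H * B)ᵀ := by
        rw [hG, hH, transpose_one, Matrix.one_mul, Matrix.mul_one]
    _ = G * (A * T i * Bᵀ) * Hᵀ := by simp only [transpose_mul, Matrix.mul_assoc]
    _ = G * A' * S i * (H * B')ᵀ := by rw [h i]; simp only [transpose_mul, Matrix.mul_assoc]

theorem IsSemibrick.exists_perm_of_sum_eq [Finite p] [Finite q] [Fintype ι] [Nonempty l]
    [Nonempty m] {T S : ι → k → Matrix l m K} (hT : IsSemibrick T) {A A' : ι → Matrix p l K}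
    {B B' : ι → Matrix q m K} (hA : Injective (hconcat A).mulVec)
    (hB : Injective (hconcat B).mulVec)
    (h : ∀ i, ∑ r, A r * T r i * (B r)ᵀ = ∑ r, A' r * S r i * (B' r)ᵀ) :
    ∃ (π : Equiv.Perm ι) (X : ι → Matrix l l K) (Y : ι → Matrix m m K), ∀ r,
      A' r = A (π r) * X r ∧ B' r = B (π r) * Y r ∧ ∀ i, T (π r) i = X r * S r i * (Y r)ᵀ := by
  classical
  have hfaithful : LeftFaithful (directSum T) :=
    leftFaithful_directSum fun r => (hT.isBrick r).leftFaithful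
  have hfaithful' : LeftFaithful fun i => (directSum T i)ᵀ := by
    simp only [directSum, blockDiagonal_transpose]
    exact leftFaithful_directSum fun r => (hT.isBrick r).transpose.leftFaithful
  obtain ⟨X, Y, hXunit, hYunit, hA', hB', hTS⟩ :=
    exists_isUnit_of_mul_mul_transpose_eq (S := directSum S) (A' := hconcat A') (B' := hconcat B')
      hfaithful hfaithful' hA hB fun i => by
        simpa only [directSum, hconcat_mul_blockDiagonal_mul] using h i
  obtain ⟨X', hXX', hX'X⟩ := isUnit_iff_exists.1 hXunit
  obtain ⟨Y', hY'Y⟩ := hYunit.exists_left_inv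
  have hST : Intertwines (directSum S) (directSum T) X Y'ᵀ := fun i => by
    rw [hTS, Matrix.mul_assoc _ Yᵀ, ← transpose_mul, hY'Y, transpose_one, Matrix.mul_one]
  have hTS' : Intertwines (directSum T) (directSum S) X' Yᵀ := fun i => by
    rw [hTS, Matrix.mul_assoc, ← Matrix.mul_assoc, hX'X, Matrix.one_mul]
  obtain ⟨π, hπ⟩ := hT.exists_perm hST hTS' hXX'
  have hX0 (r s : ι) (hrs : r ≠ π s) : block X r s = 0 := (hπ r s hrs).1
  have hY0 (r s : ι) (hrs : r ≠ π s) : block Y r s = 0 :=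
    transpose_injective (hπ r s hrs).2
  refine ⟨π, fun r => block X (π r) r, fun r => block Y (π r) r, fun r => ⟨?_, ?_, fun i => ?_⟩⟩
  · exact eq_mul_block_of_hconcat_eq_mul hA' fun s hs => hX0 s r hs
  · exact eq_mul_block_of_hconcat_eq_mul hB' fun s hs => hY0 s r hs
  · have hsingle : ∀ t ≠ r, block X (π r) t * S t i * (block Y (π r) t)ᵀ = 0 := fun t ht => by
      rw [hX0 (π r) t (π.injective.ne ht.symm), Matrix.zero_mul, Matrix.zero_mul]
    calc T (π r) i = block (directSum T i) (π r) (π r) :=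
          (block_blockDiagonal_self (fun r => T r i) (π r)).symm
      _ = ∑ t, block X (π r) t * S t i * (block Y (π r) t)ᵀ := by
          rw [hTS, block_mul]
          simp only [directSum, block_mul_blockDiagonal]
          rfl
      _ = block X (π r) r * S r i * (block Y (π r) r)ᵀ := Fintype.sum_eq_single r hsingle

end BlockTermDecomposition

section Recovery

variable {K k k' l m n p q p' q' ι : Type*} [Field K] [Fintype l] [Fintype m] [Fintype n]
  [DecidableEq l] [DecidableEq m]

theorem isSemibrick_modeProd [Nonempty l] [Nonempty m] {C : ι → Matrix k n K}
    {S : ι → n → Matrix l m K} (hC : ∀ r, Injective (C r).mulVec)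
    (hpair : ∀ r s, r ≠ s → Injective (fromCols (C r) (C s)).mulVec) (hS : ∀ r, IsBrick (S r)) :
    IsSemibrick fun r => modeProd (C r) (S r) := by
  have hmode {r s : ι} {X : Matrix l l K} {Y : Matrix m m K}
      (h : Intertwines (modeProd (C r) (S r)) (modeProd (C s) (S s)) X Y) :
      modeProd (C r) (fun j => X * S r j) = modeProd (C s) fun j => S s j * Y :=
    (map_modeProd (mulLeftLinearMap m K X) (C r) (S r)).trans
      ((funext h).trans (map_modeProd (mulRightLinearMap l K Y) (C s) (S s)).symm)
  refine ⟨fun r X Y h => hS r X Y (congrFun (modeProd_injective (hC r) (hmode h))),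
    fun r s hrs X Y h => ?_⟩
  obtain ⟨hX, hY⟩ := eq_zero_of_modeProd_eq (hpair r s hrs) (hmode h)
  refine ⟨(hS r).leftFaithful.eq_zero (congrFun hX), transpose_injective ?_⟩
  rw [transpose_zero]
  refine (hS s).transpose.leftFaithful.eq_zero fun j => ?_
  rw [← transpose_mul, congrFun hY j, Pi.zero_apply, transpose_zero]

/-- The genericity conditions on the factors of a block-term decomposition
`∑ r, S r ×₁ A r ×₂ B r ×₃ C r` under which its terms and their third-mode factors are determined
by the sum. Each core tensor `S r` is given by its frontal slices. -/
structure IsIdentifiable [Fintype ι] (A : ι → Matrix p l K) (B : ι → Matrix q m K)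
    (C : ι → Matrix k n K) (S : ι → n → Matrix l m K) : Prop where
  hconcat_left : Injective (hconcat A).mulVec
  hconcat_right : Injective (hconcat B).mulVec
  injective : ∀ r, Injective (C r).mulVec
  injective_pair : ∀ r s, r ≠ s → Injective (fromCols (C r) (C s)).mulVec
  isBrick : ∀ r, IsBrick (S r)
  linearIndependent : ∀ r, LinearIndependent K (S r)

variable [Nonempty l] [Nonempty m] [Fintype ι] [Finite p] [Finite q] [Finite p'] [Finite q']

theorem IsIdentifiable.exists_perm {A A' : ι → Matrix p l K} {B B' : ι → Matrix q m K}
    {C C' : ι → Matrix k n K} {S S' : ι → n → Matrix l m K} (h : IsIdentifiable A B C S)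
    (hsum : ∀ i, ∑ r, A r * modeProd (C r) (S r) i * (B r)ᵀ =
      ∑ r, A' r * modeProd (C' r) (S' r) i * (B' r)ᵀ) :
    ∃ (π : Equiv.Perm ι) (X : ι → Matrix l l K) (Y : ι → Matrix m m K), ∀ r,
      A' r = A (π r) * X r ∧ B' r = B (π r) * Y r ∧
        modeProd (C (π r)) (S (π r)) = modeProd (C' r) fun j => X r * S' r j * (Y r)ᵀ := by
  obtain ⟨π, X, Y, hπ⟩ := (isSemibrick_modeProd h.injective h.injective_pair
    h.isBrick).exists_perm_of_sum_eq h.hconcat_left h.hconcat_right hsum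
  refine ⟨π, X, Y, fun r => ⟨(hπ r).1, (hπ r).2.1, (funext (hπ r).2.2).trans ?_⟩⟩
  exact (modeProd_mul_mul (C' r) (X r) (S' r) (Y r)ᵀ).symm

theorem IsIdentifiable.sum_eq [Fintype k] [Nonempty n] {P : Matrix k' k K}
    {A₁ A₁' : ι → Matrix p' l K} {B₁ B₁' : ι → Matrix q' m K} {A A' : ι → Matrix p l K}
    {B B' : ι → Matrix q m K} {C C' : ι → Matrix k n K} {S S' : ι → n → Matrix l m K}
    (h₁ : IsIdentifiable A₁ B₁ C S) (h₂ : IsIdentifiable A B (fun r => P * C r) S)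
    (hsum₁ : ∀ i, ∑ r, A₁ r * modeProd (C r) (S r) i * (B₁ r)ᵀ =
      ∑ r, A₁' r * modeProd (C' r) (S' r) i * (B₁' r)ᵀ)
    (hsum₂ : ∀ i, ∑ r, A r * modeProd (P * C r) (S r) i * (B r)ᵀ =
      ∑ r, A' r * modeProd (P * C' r) (S' r) i * (B' r)ᵀ) (i : k) :
    ∑ r, A' r * modeProd (C' r) (S' r) i * (B' r)ᵀ =
      ∑ r, A r * modeProd (C r) (S r) i * (B r)ᵀ := by
  obtain ⟨σ, X₁, Y₁, hσ⟩ := h₁.exists_perm hsum₁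
  obtain ⟨π, X, Y, hπ⟩ := h₂.exists_perm hsum₂
  rw [← Equiv.sum_comp π fun r => A r * modeProd (C r) (S r) i * (B r)ᵀ]
  refine Finset.sum_congr rfl fun r _ => ?_
  obtain ⟨hA', hB', hMSI⟩ := hπ r
  obtain ⟨Z, hZ⟩ := exists_eq_mul_of_modeProd_eq (h₁.injective (σ r))
    (h₁.linearIndependent (σ r)) (hσ r).2.2
  rw [hZ] at hMSI
  have hterm : modeProd (C (π r)) (S (π r)) = modeProd (C' r) fun j => X r * S' r j * (Y r)ᵀ :=
    hZ ▸ modeProd_eq_of_mul_modeProd_eq h₂.injective h₂.injective_pair h₂.linearIndependent hMSI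
  calc A' r * modeProd (C' r) (S' r) i * (B' r)ᵀ
      = A (π r) * (X r * modeProd (C' r) (S' r) i * (Y r)ᵀ) * (B (π r))ᵀ := by
        simp only [hA', hB', transpose_mul, Matrix.mul_assoc]
    _ = A (π r) * modeProd (C (π r)) (S (π r)) i * (B (π r))ᵀ := by
        rw [hterm, modeProd_mul_mul]

end Recovery

section BrickConstruction

variable {K k l m : Type*} [Field K] [Fintype l] [Fintype m] [DecidableEq l] [DecidableEq m]

theorem eq_smul_one_of_commute_diagonal {X : Matrix l l K} {d : l → K} (hd : Injective d)
    (hX : Commute X (diagonal d)) {c : K} (hc : ∀ i, ∑ j, X i j = c) : X = c • 1 := by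
  have hoff (i j : l) (hij : j ≠ i) : X i j = 0 := by
    have h := congrFun₂ hX.eq i j
    rw [mul_diagonal, diagonal_mul, mul_comm, ← sub_eq_zero, ← sub_mul] at h
    exact (mul_eq_zero.1 h).resolve_left (sub_ne_zero.2 (hd.ne hij))
  ext i j
  rcases eq_or_ne j i with rfl | hij
  · rw [Matrix.smul_apply, one_apply_eq, smul_eq_mul, mul_one, ← hc j,
      Fintype.sum_eq_single j (hoff j)]
  · rw [hoff i j hij, Matrix.smul_apply, one_apply_ne hij.symm, smul_zero]

theorem isBrick_one_diagonal_col (i₀ : l) {d : l → K} (hd : Injective d) :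
    IsBrick ![1, diagonal d, of fun _ j => if j = i₀ then 1 else 0] := fun X Y h => by
  have hXY : X = Y := by simpa using h 0
  subst hXY
  have hX : X = X i₀ i₀ • 1 := eq_smul_one_of_commute_diagonal hd (h 1) fun i => by
    simpa [mul_apply] using congrFun₂ (h 2) i i₀
  exact ⟨_, hX, hX⟩

variable {ν : Type*}

/-- For an injection `f : m → ν × l`, the frontal slices of the partial isometries
`e_j ↦ e_i` for `f j = (t, i)`, one for each `t : ν`, followed by the slice `[diag d | 1 | 0]` whose
diagonal occupies the columns `a i` and whose column of ones is column `b`. -/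
def shiftSlices [DecidableEq ν] (f : m → ν × l) (a : l → m) (b : m) (d : l → K) :
    Option ν → Matrix l m K
  | some t => of fun i j => if f j = (t, i) then 1 else 0
  | none => of fun i j => (if j = a i then d i else 0) + if j = b then 1 else 0

theorem isBrick_shiftSlices [DecidableEq ν] {f : m → ν × l} (hf : Injective f) {a : l → m} {b : m}
    {t₀ : ν} (ha : ∀ i, f (a i) = (t₀, i)) (hb : (f b).1 ≠ t₀) {d : l → K} (hd : Injective d) :
    IsBrick (shiftSlices f a b d) := fun X Y h => by
  have hY (j j' : m) : Y j j' = if (f j').1 = (f j).1 then X (f j).2 (f j').2 else 0 := by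
    have hj := congrFun₂ (h (some (f j).1)) (f j).2 j'
    simp only [shiftSlices, mul_apply, of_apply, Prod.mk.eta, hf.eq_iff, ite_mul, one_mul, zero_mul,
      Finset.sum_ite_eq', Finset.mem_univ, if_true] at hj
    rw [← hj]
    simp [Prod.ext_iff, ite_and]
  have ha' : Injective a := fun i j hij => by
    simpa only [ha, Prod.mk.injEq, true_and] using congrArg f hij
  have hab (i : l) : b ≠ a i := by
    rintro rfl
    exact hb (congrArg Prod.fst (ha i))
  have hlast (i : l) (j : m) : (X * shiftSlices f a b d none) i j = d i * Y (a i) j + Y b j := by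
    rw [h none]
    simp [shiftSlices, mul_apply, add_mul, Finset.sum_add_distrib]
  have hdiag : Commute X (diagonal d) := by
    ext i j
    have hij := hlast i (a j)
    simpa [shiftSlices, mul_apply, hY, ha, ha'.eq_iff, (hab _).symm, hb.symm, diagonal_apply]
      using hij
  obtain ⟨c, rfl⟩ : ∃ c : K, X = c • 1 := by
    refine ⟨X (f b).2 (f b).2, eq_smul_one_of_commute_diagonal hd hdiag fun i => ?_⟩
    have hib := hlast i b
    simpa [shiftSlices, mul_apply, hY, ha, hab, hb] using hib
  refine ⟨c, rfl, ?_⟩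
  ext j j'
  have hjj' : j = j' ↔ (f j').1 = (f j).1 ∧ (f j).2 = (f j').2 := by
    rw [← hf.eq_iff, Prod.ext_iff, eq_comm (a := (f j).1)]
  simp only [hY, Matrix.smul_apply, one_apply, hjj', ite_and, smul_ite, smul_zero]

theorem exists_isBrick_of_embedding {κ : Type*} {T : κ → Matrix l m K} (hT : IsBrick T)
    (e : κ ↪ k) : ∃ S : k → Matrix l m K, IsBrick S :=
  ⟨extend e T 0, fun X Y h => hT X Y fun i => by
    simpa only [e.injective.extend_apply] using h (e i)⟩

theorem exists_isBrick_of_lt [Infinite K] {L M N : ℕ} (hL : 0 < L) (hLM : L < M)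
    (hM : M ≤ (N - 1) * L) : ∃ S : Fin N → Matrix (Fin L) (Fin M) K, IsBrick S := by
  have hNpos : 0 < N - 1 := pos_of_mul_pos_left (hL.trans (hLM.trans_le hM)) L.zero_le
  have hbrick : IsBrick (shiftSlices (finProdFinEquiv.symm ∘ Fin.castLE hM) (Fin.castLE hLM.le)
      ⟨L, hLM⟩ (Infinite.natEmbedding K ∘ Fin.val)) := by
    refine isBrick_shiftSlices (t₀ := ⟨0, hNpos⟩)
      (finProdFinEquiv.symm.injective.comp (Fin.castLE_injective hM)) (fun i => ?_) ?_
      ((Infinite.natEmbedding K).injective.comp Fin.val_injective)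
    · rw [Function.comp_apply, Equiv.symm_apply_eq]
      exact Fin.ext (by simp)
    · refine Fin.ne_of_val_ne ?_
      simp [finProdFinEquiv, Fin.divNat, hL]
  exact exists_isBrick_of_embedding hbrick
    (Function.Embedding.nonempty_of_card_le (by simp; omega)).some

theorem exists_isBrick [Infinite K] {L M N : ℕ} (hL : 0 < L) (hM : 0 < M)
    (hN : max (⌈(L : ℚ) / M⌉₊ + ⌈(M : ℚ) / L⌉₊) 3 ≤ N) :
    ∃ S : Fin N → Matrix (Fin L) (Fin M) K, IsBrick S := by
  obtain ⟨hceil, hthree⟩ := max_le_iff.1 hN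
  have hle {a b : ℕ} (ha : 0 < a) (hb : 0 < b) (h : ⌈(a : ℚ) / b⌉₊ + ⌈(b : ℚ) / a⌉₊ ≤ N) :
      b ≤ (N - 1) * a := by
    have ha' : (0 : ℚ) < a := Nat.cast_pos.2 ha
    have hceil_pos : 0 < ⌈(a : ℚ) / b⌉₊ := Nat.ceil_pos.2 (div_pos ha' (Nat.cast_pos.2 hb))
    have hdiv : (b : ℚ) / a ≤ (N - 1 : ℕ) := Nat.ceil_le.1 (by omega)
    exact_mod_cast (div_le_iff₀ ha').1 hdiv
  rcases lt_trichotomy L M with hLM | rfl | hML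
  · exact exists_isBrick_of_lt hL hLM (hle hL hM hceil)
  · exact exists_isBrick_of_embedding (isBrick_one_diagonal_col ⟨0, hL⟩
      ((Infinite.natEmbedding K).injective.comp Fin.val_injective)) (Fin.castLEEmb hthree)
  · obtain ⟨S, hS⟩ := exists_isBrick_of_lt (K := K) hM hML (hle hM hL (by rwa [add_comm]))
    exact ⟨_, hS.transpose⟩

end BrickConstruction

section Genericity

variable {E : Type*} [NormedAddCommGroup E] [NormedSpace ℝ E] [FiniteDimensional ℝ E]
  [MeasurableSpace E] [BorelSpace E] (μ : Measure E) [μ.IsAddHaarMeasure]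

theorem ae_det_ne_zero {m : Type*} [Fintype m] [DecidableEq m] (Φ : E →ₗ[ℝ] Matrix m m ℝ)
    {x₀ : E} (hx₀ : Φ x₀ = 1) : ∀ᵐ x ∂μ, (Φ x).det ≠ 0 := by
  have hcont : Continuous fun x => (Φ x).det :=
    Continuous.matrix_det (LinearMap.continuous_of_finiteDimensional Φ)
  have hmeas : MeasurableSet {x | (Φ x).det ≠ 0} :=
    (isOpen_ne_fun hcont continuous_const).measurableSet
  -- Along every line parallel to `x₀`, the determinant is a characteristic polynomial.
  refine ae_mem_of_ae_add_linearMap_mem (LinearMap.toSpanSingleton ℝ E x₀) volume μ hmeas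
    fun y => ?_
  have hroots : {t : ℝ | (-Φ y).charpoly.IsRoot t}.Finite :=
    Polynomial.finite_setOfPred_isRoot (charpoly_monic _).ne_zero
  filter_upwards [hroots.countable.ae_notMem volume] with t ht hdet
  refine ht ?_
  rw [Polynomial.IsRoot, eval_charpoly, ← hdet]
  simp only [LinearMap.toSpanSingleton_apply, map_add, map_smul, hx₀, sub_neg_eq_add, add_comm,
    smul_one_eq_diagonal, scalar_apply]

theorem ae_injective_of_injective {V W : Type*} [AddCommGroup V] [Module ℝ V]
    [FiniteDimensional ℝ V] [AddCommGroup W] [Module ℝ W] (T : E →ₗ[ℝ] V →ₗ[ℝ] W) {x₀ : E}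
    (hx₀ : Injective (T x₀)) : ∀ᵐ x ∂μ, Injective (T x) := by
  obtain ⟨G, hG⟩ := (T x₀).exists_leftInverse_of_injective (LinearMap.ker_eq_bot.2 hx₀)
  let b := Module.finBasis ℝ V
  let Φ := (LinearMap.toMatrix b b).toLinearMap ∘ₗ LinearMap.llcomp ℝ V W V G ∘ₗ T
  have hΦ₀ : Φ x₀ = 1 := (congrArg (LinearMap.toMatrix b b) hG).trans (LinearMap.toMatrix_id b)
  filter_upwards [ae_det_ne_zero μ Φ hΦ₀] with x hx
  have hunit : IsUnit (LinearMap.toMatrix b b (G ∘ₗ T x)) :=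
    (isUnit_iff_isUnit_det _).2 hx.isUnit
  have hGT : Injective (G ∘ T x) :=
    ((Module.End.isUnit_iff _).1 ((LinearMap.isUnit_toMatrix_iff b).1 hunit)).injective
  exact hGT.of_comp

theorem exists_mulVec_mul_injective {K k n p : Type*} [Field K] [Fintype p] [Fintype n]
    {P : Matrix k p K} (hP : Fintype.card n ≤ P.rank) :
    ∃ X : Matrix p n K, Injective (P * X).mulVec := by
  obtain ⟨v, hv⟩ := exists_linearIndependent_of_le_finrank (M := P.mulVecLin.range) hP
  choose w hw using fun j => (v j).2
  refine ⟨of fun i j => w (Fintype.equivFin n j) i, mulVec_injective_iff.2 ?_⟩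
  have hcol : (P * of fun i j => w (Fintype.equivFin n j) i).col =
      (P.mulVecLin.range.subtype ∘ v) ∘ Fintype.equivFin n :=
    funext fun j => hw (Fintype.equivFin n j)
  rw [hcol]
  exact (hv.map' _ (Submodule.ker_subtype _)).comp _ (Fintype.equivFin n).injective

theorem ae_mulVec_mul_injective {k n p : Type*} [Fintype p] [Fintype n] {P : Matrix k p ℝ}
    (hP : Fintype.card n ≤ P.rank) (Φ : E →ₗ[ℝ] Matrix p n ℝ) (hΦ : Surjective Φ) :
    ∀ᵐ x ∂μ, Injective (P * Φ x).mulVec := by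
  obtain ⟨X, hX⟩ := exists_mulVec_mul_injective hP
  obtain ⟨x₀, rfl⟩ := hΦ X
  exact ae_injective_of_injective μ (mulVecBilin ℝ ℝ ∘ₗ mulLeftLinearMap n ℝ P ∘ₗ Φ) hX

end Genericity

section GenericFactors

instance isAddHaarMeasure_volume_pi₃ (a b c : Type*) [Fintype a] [Fintype b] [Fintype c] :
    (volume : Measure (a → b → c → ℝ)).IsAddHaarMeasure := by
  have hc : (volume : Measure (c → ℝ)).IsAddHaarMeasure := Measure.pi.isAddHaarMeasure _
  have hbc : (volume : Measure (b → c → ℝ)).IsAddHaarMeasure := Measure.pi.isAddHaarMeasure _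
  exact Measure.pi.isAddHaarMeasure _

variable {R L M N p : ℕ}

theorem ae_hconcat_mul_submatrix_injective {k n : Type*} [Fintype n] {P : Matrix k (Fin p) ℝ}
    {f : n → Fin L × Fin R} (hf : Injective f) (hP : Fintype.card n ≤ P.rank) :
    ∀ᵐ A : Fin R → Matrix (Fin p) (Fin L) ℝ,
      Injective ((hconcat fun r => P * A r).submatrix id f).mulVec := by
  let Φ : (Fin R → Fin p → Fin L → ℝ) →ₗ[ℝ] Matrix (Fin p) n ℝ :=
    { toFun A := (hconcat A).submatrix id f
      map_add' _ _ := rfl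
      map_smul' _ _ := rfl }
  have hΦ : Surjective Φ := fun X =>
    ⟨fun r i j => extend f (X i) 0 (j, r), Matrix.ext fun i j => hf.extend_apply (X i) 0 j⟩
  exact ae_mulVec_mul_injective volume hP Φ hΦ

theorem ae_hconcat_mul_injective {k : Type*} {P : Matrix k (Fin p) ℝ} (hP : L * R ≤ P.rank) :
    ∀ᵐ A : Fin R → Matrix (Fin p) (Fin L) ℝ, Injective (hconcat fun r => P * A r).mulVec :=
  ae_hconcat_mul_submatrix_injective injective_id (by simpa using hP)

theorem ae_mul_injective {k : Type*} {P : Matrix k (Fin p) ℝ} (hP : L ≤ P.rank) (r : Fin R) :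
    ∀ᵐ A : Fin R → Matrix (Fin p) (Fin L) ℝ, Injective (P * A r).mulVec :=
  ae_hconcat_mul_submatrix_injective (f := (·, r)) (Prod.mk_left_injective r) (by simpa using hP)

theorem ae_fromCols_mul_injective {k : Type*} {P : Matrix k (Fin p) ℝ} (hP : 2 * L ≤ P.rank)
    {r s : Fin R} (hrs : r ≠ s) :
    ∀ᵐ A : Fin R → Matrix (Fin p) (Fin L) ℝ, Injective (fromCols (P * A r) (P * A s)).mulVec := by
  have hf : Injective (Sum.elim (·, r) (·, s) : Fin L ⊕ Fin L → Fin L × Fin R) :=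
    (Prod.mk_left_injective r).sumElim (Prod.mk_left_injective s) fun i j hij =>
      hrs (congrArg Prod.snd hij)
  filter_upwards [ae_hconcat_mul_submatrix_injective (P := P) hf (by simpa [two_mul] using hP)]
    with A hA
  convert hA using 2
  ext i (j | j) <;> rfl

/-- The frontal slices `D(:, :, j)` of a third-order tensor. -/
def frontalSlice {l m n K : Type*} (D : l → m → n → K) (j : n) : Matrix l m K :=
  of fun i i' => D i i' j

theorem ae_injective_frontalSlice {V W : Type*} [AddCommGroup V] [Module ℝ V]
    [FiniteDimensional ℝ V] [AddCommGroup W] [Module ℝ W]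
    (T : (Fin N → Matrix (Fin L) (Fin M) ℝ) →ₗ[ℝ] V →ₗ[ℝ] W)
    (hT : ∃ S, Injective (T S)) :
    ∀ᵐ D : Fin L → Fin M → Fin N → ℝ, Injective (T (frontalSlice D)) := by
  obtain ⟨S, hS⟩ := hT
  let Φ : (Fin L → Fin M → Fin N → ℝ) →ₗ[ℝ] Fin N → Matrix (Fin L) (Fin M) ℝ :=
    { toFun := frontalSlice
      map_add' _ _ := rfl
      map_smul' _ _ := rfl }
  exact ae_injective_of_injective volume (T ∘ₗ Φ) (x₀ := fun i j n => S n i j) hS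

theorem ae_linearIndependent_frontalSlice (hN : N ≤ L * M) :
    ∀ᵐ D : Fin L → Fin M → Fin N → ℝ, LinearIndependent ℝ (frontalSlice D) := by
  obtain ⟨S, hS⟩ := exists_linearIndependent_of_le_finrank (R := ℝ)
    (M := Matrix (Fin L) (Fin M) ℝ) (n := N) (by simpa [Module.finrank_matrix] using hN)
  rw [linearIndependent_iff_injective_fintypeLinearCombination] at hS
  simp only [linearIndependent_iff_injective_fintypeLinearCombination]
  exact ae_injective_frontalSlice (Fintype.bilinearCombination ℝ ℝ) ⟨S, hS⟩

/-- The bilinear map `(T, (X, Y)) ↦ (X * T i - T i * Y)ᵢ`, whose zeros are the endomorphisms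
`(X, Y)` of `T`. -/
def endomorphismDefect (K k l m : Type*) [Field K] [Fintype l] [Fintype m] :
    (k → Matrix l m K) →ₗ[K] (Matrix l l K × Matrix m m K) →ₗ[K] k → Matrix l m K :=
  LinearMap.mk₂ K (fun T XY i => XY.1 * T i - T i * XY.2)
    (fun T T' XY => by
      funext i
      simp only [Pi.add_apply, Matrix.mul_add, Matrix.add_mul, add_sub_add_comm])
    (fun c T XY => by
      funext i
      simp only [Pi.smul_apply, Matrix.mul_smul, Matrix.smul_mul, smul_sub])
    (fun T XY XY' => by
      funext i
      simp only [Pi.add_apply, Prod.fst_add, Prod.snd_add, Matrix.mul_add, Matrix.add_mul,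
        add_sub_add_comm])
    (fun c T XY => by
      funext i
      simp only [Pi.smul_apply, Prod.smul_fst, Prod.smul_snd, Matrix.mul_smul, Matrix.smul_mul,
        smul_sub])

theorem endomorphismDefect_apply {K k l m : Type*} [Field K] [Fintype l] [Fintype m]
    (T : k → Matrix l m K) (XY : Matrix l l K × Matrix m m K) (i : k) :
    endomorphismDefect K k l m T XY i = XY.1 * T i - T i * XY.2 :=
  rfl

theorem isBrick_iff_domRestrict₂_injective {K k l m : Type*} [Field K] [Fintype l] [Fintype m]
    [DecidableEq l] [DecidableEq m] (i₀ : l) {T : k → Matrix l m K} :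
    IsBrick T ↔ Injective ((endomorphismDefect K k l m).domRestrict₂
      (LinearMap.ker (entryLinearMap K K i₀ i₀ ∘ₗ LinearMap.fst K _ (Matrix m m K))) T) := by
  -- Requiring `X i₀ i₀ = 0` leaves `0` as the only scalar endomorphism.
  rw [← LinearMap.ker_eq_bot, LinearMap.ker_eq_bot']
  constructor
  · rintro hT ⟨⟨X, Y⟩, hX₀⟩ h
    obtain ⟨c, rfl, rfl⟩ := hT X Y fun i => sub_eq_zero.1 (congrFun h i)
    have hc : c = 0 := by simpa using hX₀
    simp [hc]
  · intro h X Y hXY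
    have hzero := h ⟨(X - X i₀ i₀ • 1, Y - X i₀ i₀ • 1), by simp⟩ (by
      funext i
      simp only [LinearMap.domRestrict₂_apply, endomorphismDefect_apply, Matrix.sub_mul,
        Matrix.mul_sub, hXY i, Matrix.smul_mul, Matrix.mul_smul, Matrix.one_mul, Matrix.mul_one,
        sub_self, Pi.zero_apply])
    exact ⟨X i₀ i₀, by simpa [sub_eq_zero] using hzero⟩

theorem ae_isBrick_frontalSlice (hL : 0 < L) (hM : 0 < M)
    (hN : max (⌈(L : ℚ) / M⌉₊ + ⌈(M : ℚ) / L⌉₊) 3 ≤ N) :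
    ∀ᵐ D : Fin L → Fin M → Fin N → ℝ, IsBrick (frontalSlice D) := by
  have hbrick := exists_isBrick (K := ℝ) hL hM hN
  simp only [isBrick_iff_domRestrict₂_injective (⟨0, hL⟩ : Fin L)] at hbrick ⊢
  exact ae_injective_frontalSlice _ hbrick

theorem ae_isIdentifiable {IM IH JM JH KH KM : ℕ} {P₁ : Matrix (Fin IH) (Fin IM) ℝ}
    {P₂ : Matrix (Fin JH) (Fin JM) ℝ} {P₃ : Matrix (Fin KM) (Fin KH) ℝ}
    (hP₁ : L * R ≤ P₁.rank) (hP₂ : M * R ≤ P₂.rank) (hP₃ : 2 * N ≤ P₃.rank) (hL : 0 < L)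
    (hM : 0 < M) (hNupper : N ≤ L * M) (hNlower : max (⌈(L : ℚ) / M⌉₊ + ⌈(M : ℚ) / L⌉₊) 3 ≤ N) :
    ∀ᵐ x : (Fin R → Matrix (Fin IM) (Fin L) ℝ) × (Fin R → Matrix (Fin JM) (Fin M) ℝ) ×
        (Fin R → Matrix (Fin KH) (Fin N) ℝ) × (Fin R → Fin L → Fin M → Fin N → ℝ),
      IsIdentifiable (fun r => P₁ * x.1 r) (fun r => P₂ * x.2.1 r) (fun r => P₃ * x.2.2.1 r)
        fun r => frontalSlice (x.2.2.2 r) := by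
  have hC : ∀ᵐ C : Fin R → Matrix (Fin KH) (Fin N) ℝ, (∀ r, Injective (P₃ * C r).mulVec) ∧
      ∀ r s, r ≠ s → Injective (fromCols (P₃ * C r) (P₃ * C s)).mulVec :=
    (ae_all_iff.2 fun r => ae_mul_injective (by omega) r).and <|
      ae_all_iff.2 fun r => ae_all_iff.2 fun s =>
        ae_all_iff.2 fun hrs => ae_fromCols_mul_injective hP₃ hrs
  have hD₁ : ∀ᵐ D : Fin L → Fin M → Fin N → ℝ,
      IsBrick (frontalSlice D) ∧ LinearIndependent ℝ (frontalSlice D) :=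
    (ae_isBrick_frontalSlice hL hM hNlower).and (ae_linearIndependent_frontalSlice hNupper)
  have heval (r : Fin R) : Measure.QuasiMeasurePreserving
      (eval r : (Fin R → Fin L → Fin M → Fin N → ℝ) → Fin L → Fin M → Fin N → ℝ) :=
    Measure.quasiMeasurePreserving_eval _ r
  have hD : ∀ᵐ D : Fin R → Fin L → Fin M → Fin N → ℝ, ∀ r,
      IsBrick (frontalSlice (D r)) ∧ LinearIndependent ℝ (frontalSlice (D r)) :=
    ae_all_iff.2 fun r => (heval r).ae hD₁
  filter_upwards [Measure.quasiMeasurePreserving_fst.ae (ae_hconcat_mul_injective hP₁),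
    Measure.quasiMeasurePreserving_snd.ae
      (Measure.quasiMeasurePreserving_fst.ae (ae_hconcat_mul_injective hP₂)),
    Measure.quasiMeasurePreserving_snd.ae (Measure.quasiMeasurePreserving_snd.ae
      (Measure.quasiMeasurePreserving_fst.ae hC)),
    Measure.quasiMeasurePreserving_snd.ae (Measure.quasiMeasurePreserving_snd.ae
      (Measure.quasiMeasurePreserving_snd.ae hD))] with x hxA hxB hxC hxD
  exact ⟨hxA, hxB, hxC.1, hxC.2, fun r => (hxD r).1, fun r => (hxD r).2⟩

end GenericFactors

theorem sum_tucker_apply {R L M N I J K : ℕ} (D : Fin R → Fin L → Fin M → Fin N → ℝ)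
    (A : Fin R → Matrix (Fin I) (Fin L) ℝ) (B : Fin R → Matrix (Fin J) (Fin M) ℝ)
    (C : Fin R → Matrix (Fin K) (Fin N) ℝ) (i : Fin I) (j : Fin J) (k : Fin K) :
    ∑ r, tucker (D r) (A r) (B r) (C r) i j k =
      (∑ r, A r * modeProd (C r) (frontalSlice (D r)) k * (B r)ᵀ) i j := by
  rw [Matrix.sum_apply]
  refine Finset.sum_congr rfl fun r _ => ?_
  simp only [tucker, frontalSlice, modeProd_apply, mul_apply, Matrix.sum_apply, Matrix.smul_apply,
    of_apply, transpose_apply, smul_eq_mul, Finset.sum_mul, Finset.mul_sum]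
  rw [Finset.sum_comm]
  refine Finset.sum_congr rfl fun b _ => Finset.sum_congr rfl fun a _ =>
    Finset.sum_congr rfl fun n _ => ?_
  ring

theorem sri_recoverability_blind_general {R L M N IM JM KH IH JH KM : ℕ} (hNupper : N ≤ L * M)
    (hNlower : max (⌈(L : ℚ) / M⌉₊ + ⌈(M : ℚ) / L⌉₊) 3 ≤ N)
    {P₁ : Matrix (Fin IH) (Fin IM) ℝ} {P₂ : Matrix (Fin JH) (Fin JM) ℝ}
    {PM : Matrix (Fin KM) (Fin KH) ℝ} (hP₁ : L * R ≤ P₁.rank) (hP₂ : M * R ≤ P₂.rank)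
    (hPM : 2 * N ≤ PM.rank) :
    ∀ᵐ x : (Fin R → Matrix (Fin IM) (Fin L) ℝ) × (Fin R → Matrix (Fin JM) (Fin M) ℝ) ×
        (Fin R → Matrix (Fin KH) (Fin N) ℝ) × (Fin R → (Fin L → Fin M → Fin N → ℝ))
        ∂volume,
      ∀ (At : Fin R → Matrix (Fin IH) (Fin L) ℝ) (Bt : Fin R → Matrix (Fin JH) (Fin M) ℝ)
        (A' : Fin R → Matrix (Fin IM) (Fin L) ℝ) (B' : Fin R → Matrix (Fin JM) (Fin M) ℝ)
        (C' : Fin R → Matrix (Fin KH) (Fin N) ℝ) (D' : Fin R → (Fin L → Fin M → Fin N → ℝ)),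
        (∀ i j k, (∑ r, tucker (x.2.2.2 r) (P₁ * x.1 r) (P₂ * x.2.1 r) (x.2.2.1 r) i j k)
            = ∑ r, tucker (D' r) (At r) (Bt r) (C' r) i j k) →
        (∀ i j k, (∑ r, tucker (x.2.2.2 r) (x.1 r) (x.2.1 r) (PM * x.2.2.1 r) i j k)
            = ∑ r, tucker (D' r) (A' r) (B' r) (PM * C' r) i j k) →
        (∀ i j k, (∑ r, tucker (D' r) (A' r) (B' r) (C' r) i j k)
            = ∑ r, tucker (x.2.2.2 r) (x.1 r) (x.2.1 r) (x.2.2.1 r) i j k) := by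
  have hLM : 0 < L * M := (show 0 < N by omega).trans_le hNupper
  have hL : 0 < L := Nat.pos_of_mul_pos_right hLM
  have hM : 0 < M := Nat.pos_of_mul_pos_left hLM
  have hrank {a b c : ℕ} {P : Matrix (Fin b) (Fin a) ℝ} (hP : c ≤ P.rank) :
      c ≤ (1 : Matrix (Fin a) (Fin a) ℝ).rank := by
    simpa only [rank_one, Fintype.card_fin] using hP.trans P.rank_le_width
  have : Nonempty (Fin L) := ⟨⟨0, hL⟩⟩
  have : Nonempty (Fin M) := ⟨⟨0, hM⟩⟩
  have : Nonempty (Fin N) := ⟨⟨0, by omega⟩⟩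
  filter_upwards [ae_isIdentifiable hP₁ hP₂ (hrank hPM) hL hM hNupper hNlower,
    ae_isIdentifiable (hrank hP₁) (hrank hP₂) hPM hL hM hNupper hNlower]
    with x hHSI hMSI At Bt A' B' C' D' hYH hYM i j k
  simp only [Matrix.one_mul] at hHSI hMSI
  simp only [sum_tucker_apply] at hYH hYM ⊢
  exact congrFun₂ (hHSI.sum_eq hMSI (fun k => Matrix.ext fun i j => hYH i j k)
    (fun k => Matrix.ext fun i j => hYM i j k) k) i j

/-- **Theorem 3 (Recoverability with unknown spatial degradation operators).** -/
theorem sri_recoverability_blind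
    (R L M N IM JM KH IH JH KM : ℕ)
    (hR : 0 < R) (hL : 0 < L) (hM : 0 < M) (hN0 : 0 < N)
    (hIM : 0 < IM) (hJM : 0 < JM) (hKH : 0 < KH)
    (hIH : 0 < IH) (hJH : 0 < JH) (hKM : 0 < KM)
    (h1 : KM ≥ 2 * N)
    (h2 : IH ≥ L * R) (h3 : JH ≥ M * R)
    (h4 : IM ≥ L * R) (h5 : JM ≥ M * R)
    (hNupper : L * M ≥ N)
    (hNlower : N ≥ max (⌈(L : ℚ) / (M : ℚ)⌉₊ + ⌈(M : ℚ) / (L : ℚ)⌉₊) 3)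
    (P₁ : Matrix (Fin IH) (Fin IM) ℝ) (P₂ : Matrix (Fin JH) (Fin JM) ℝ)
    (PM : Matrix (Fin KM) (Fin KH) ℝ)
    (hP₁ : P₁.rank = IH) (hP₂ : P₂.rank = JH) (hPM : PM.rank = KM) :
    ∀ᵐ x : (Fin R → Matrix (Fin IM) (Fin L) ℝ) × (Fin R → Matrix (Fin JM) (Fin M) ℝ) ×
        (Fin R → Matrix (Fin KH) (Fin N) ℝ) × (Fin R → (Fin L → Fin M → Fin N → ℝ))
        ∂volume,
      ∀ (At : Fin R → Matrix (Fin IH) (Fin L) ℝ) (Bt : Fin R → Matrix (Fin JH) (Fin M) ℝ)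
        (A' : Fin R → Matrix (Fin IM) (Fin L) ℝ) (B' : Fin R → Matrix (Fin JM) (Fin M) ℝ)
        (C' : Fin R → Matrix (Fin KH) (Fin N) ℝ) (D' : Fin R → (Fin L → Fin M → Fin N → ℝ)),
        -- the candidate factors reproduce the HSI
        (∀ i j k, (∑ r, tucker (x.2.2.2 r) (P₁ * x.1 r) (P₂ * x.2.1 r) (x.2.2.1 r) i j k)
            = ∑ r, tucker (D' r) (At r) (Bt r) (C' r) i j k) →
        -- the candidate factors reproduce the MSI
        (∀ i j k, (∑ r, tucker (x.2.2.2 r) (x.1 r) (x.2.1 r) (PM * x.2.2.1 r) i j k)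
            = ∑ r, tucker (D' r) (A' r) (B' r) (PM * C' r) i j k) →
        -- then they recover the ground-truth SRI
        (∀ i j k, (∑ r, tucker (D' r) (A' r) (B' r) (C' r) i j k)
            = ∑ r, tucker (x.2.2.2 r) (x.1 r) (x.2.1 r) (x.2.2.1 r) i j k) :=
  sri_recoverability_blind_general hNupper hNlower (h2.trans_eq hP₁.symm) (h3.trans_eq hP₂.symm)
    (h1.trans_eq hPM.symm)
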